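/- Let d ∈ (1/4, 1/2), λ > 0, t > 0, m ≥ 2, and define h_t^λ(x₁, x₂) = ∫_0^t e^{−λ(s−x₁)_+} e^{−λ(s−x₂)_+} (s−x₁)_+^{d−1} (s−x₂)_+^{d−1} ds for (x₁,x₂) ∈ ℝ². Then, with indices taken cyclically (x_{m+1} = x_1, s_{m+1} = s_1), ∫_{ℝ^m} ∏_{j=1}^m h_t^λ(x_j, x_{j+1}) dx_1 ⋯ dx_m = ∫_0^t ⋯ ∫_0^t ∏_{j=1}^m G_λ(s_j, s_{j+1}) ds_1 ⋯ ds_m, where G_λ(u,v) = (|u−v|/2)^{2d−1} ∫_1^∞ (w² − 1)^{d−1} e^{−λ|u−v| w} dw for u ≠ v. -/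

import Mathlib

open MeasureTheory Real Set

/-- The kernel `h_t^λ(x₁,x₂)` of the tempered Rosenblatt process. -/
noncomputable def tRosKernel (d lam t : ℝ) (x₁ x₂ : ℝ) : ℝ :=
  ∫ s in Set.Ioc (0 : ℝ) t,
    Real.exp (-lam * max (s - x₁) 0) * Real.exp (-lam * max (s - x₂) 0) *
      (max (s - x₁) 0) ^ (d - 1) * (max (s - x₂) 0) ^ (d - 1)

/-- `G_λ(u,v) = (|u−v|/2)^{2d−1} ∫_1^∞ (w²−1)^{d−1} e^{−λ|u−v|w} dw`. -/
noncomputable def besselG (d lam u v : ℝ) : ℝ :=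
  (|u - v| / 2) ^ (2 * d - 1) *
    ∫ w in Set.Ioi (1 : ℝ), (w ^ 2 - 1) ^ (d - 1) * Real.exp (-lam * |u - v| * w)

open scoped ENNReal

theorem aux_lintegral_prod {n : ℕ} (μ : Measure ℝ) [SigmaFinite μ] (f : Fin n → ℝ → ℝ≥0∞)
    (hf : ∀ i, Measurable (f i)) :
    ∫⁻ x : Fin n → ℝ, ∏ i, f i (x i) ∂(Measure.pi fun _ => μ) = ∏ i, ∫⁻ x, f i x ∂μ := by
  induction n with
  | zero => simp
  | succ n ih =>
    rw [← ((measurePreserving_piFinSuccAbove (fun _ : Fin (n+1) => μ) 0).symm).lintegral_comp_emb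
      (MeasurableEquiv.measurableEmbedding _)]
    have h : ∀ p : ℝ × (Fin n → ℝ),
        ∏ i, f i ((MeasurableEquiv.piFinSuccAbove (fun _ : Fin (n+1) => ℝ) 0).symm p i)
          = f 0 p.1 * ∏ i : Fin n, f i.succ (p.2 i) := by
      intro p
      rw [Fin.prod_univ_succ]
      simp [MeasurableEquiv.piFinSuccAbove_symm_apply, Fin.insertNthEquiv]
    simp_rw [h]
    have hm : Measurable fun y : Fin n → ℝ => ∏ i : Fin n, f i.succ (y i) :=
      Finset.measurable_fun_prod _ fun i _ => (hf _).comp (measurable_pi_apply i)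
    rw [lintegral_prod_mul (g := fun y : Fin n → ℝ => ∏ i : Fin n, f i.succ (y i))
      (hf 0).aemeasurable hm.aemeasurable, ih (fun i => f i.succ) (fun i => hf _),
      Fin.prod_univ_succ]

/-- the one-sided tempered power -/
noncomputable def auxf (d lam z : ℝ) : ℝ := Real.exp (-lam * max z 0) * (max z 0) ^ (d - 1)

theorem auxf_nonneg (d lam z : ℝ) : 0 ≤ auxf d lam z := by
  unfold auxf; positivity

theorem auxf_meas (d lam : ℝ) : Measurable (auxf d lam) := by
  unfold auxf; fun_prop

theorem auxf_zero {d lam z : ℝ} (hd : d < 1/2) (hz : z ≤ 0) : auxf d lam z = 0 := by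
  unfold auxf
  rw [max_eq_right hz, Real.zero_rpow (by linarith), mul_zero]

theorem auxf_pos {d lam z : ℝ} (hz : 0 < z) :
    auxf d lam z = Real.exp (-lam * z) * z ^ (d - 1) := by
  unfold auxf
  rw [max_eq_left hz.le]

theorem auxf_int {d lam : ℝ} (hd₁ : 1/4 < d) (hd₂ : d < 1/2) (hlam : 0 < lam) :
    Integrable (auxf d lam) := by
  have h := integrableOn_rpow_mul_exp_neg_mul_rpow (p := 1) (s := d - 1) (b := lam)
    (by linarith) one_pos hlam
  rw [← integrable_indicator_iff measurableSet_Ioi] at h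
  refine h.congr (ae_of_all _ fun z => ?_)
  by_cases hz : 0 < z
  · simp [indicator, hz, auxf_pos hz, mul_comm]
  · simp [indicator, hz, auxf_zero hd₂ (not_lt.mp hz)]

theorem auxf_le {d lam a z : ℝ} (hd₂ : d < 1/2) (hlam : 0 < lam) (ha : 0 < a) (hz : a ≤ z) :
    auxf d lam z ≤ a ^ (d - 1) := by
  rw [auxf_pos (ha.trans_le hz)]
  have h1 : Real.exp (-lam * z) ≤ 1 := by
    rw [Real.exp_le_one_iff]; nlinarith
  have h2 : z ^ (d - 1) ≤ a ^ (d - 1) :=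
    Real.rpow_le_rpow_of_nonpos ha hz (by linarith)
  have h3 : 0 ≤ z ^ (d - 1) := Real.rpow_nonneg (ha.le.trans hz) _
  calc _ ≤ 1 * a ^ (d - 1) := by gcongr
    _ = _ := one_mul _

theorem aux_mul_le {d lam a z w : ℝ} (hd₂ : d < 1/2) (hlam : 0 < lam) (ha : 0 < a)
    (hz : w + a ≤ z) : auxf d lam z * auxf d lam w ≤ a ^ (d - 1) * auxf d lam w := by
  by_cases hw : 0 < w
  · exact mul_le_mul_of_nonneg_right (auxf_le hd₂ hlam ha (by linarith)) (auxf_nonneg _ _ _)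
  · simp [auxf_zero hd₂ (not_lt.mp hw)]

/-- integral over the space variable, `u < v` -/
theorem aux_int_x {d lam u v : ℝ} (hd₁ : 1/4 < d) (hd₂ : d < 1/2) (hlam : 0 < lam) (huv : u < v) :
    Integrable (fun x => auxf d lam (u - x) * auxf d lam (v - x)) := by
  have h : Integrable (fun x => (v - u) ^ (d - 1) * auxf d lam (u - x)) :=
    ((auxf_int hd₁ hd₂ hlam).comp_sub_left u).const_mul _
  refine h.mono' ?_ (ae_of_all _ fun x => ?_)
  · have := auxf_meas d lam
    exact Measurable.aestronglyMeasurable (by fun_prop)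
  · rw [Real.norm_of_nonneg (mul_nonneg (auxf_nonneg _ _ _) (auxf_nonneg _ _ _)), mul_comm]
    exact aux_mul_le hd₂ hlam (by linarith) (by linarith)

/-- integral over the time variable, `x < y` -/
theorem aux_int_s {d lam x y : ℝ} (hd₁ : 1/4 < d) (hd₂ : d < 1/2) (hlam : 0 < lam) (hxy : x < y) :
    Integrable (fun s => auxf d lam (s - x) * auxf d lam (s - y)) := by
  have h : Integrable (fun s => (y - x) ^ (d - 1) * auxf d lam (s - y)) :=
    ((auxf_int hd₁ hd₂ hlam).comp_sub_right y).const_mul _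
  refine h.mono' ?_ (ae_of_all _ fun s => ?_)
  · have := auxf_meas d lam
    exact Measurable.aestronglyMeasurable (by fun_prop)
  · rw [Real.norm_of_nonneg (mul_nonneg (auxf_nonneg _ _ _) (auxf_nonneg _ _ _))]
    exact aux_mul_le hd₂ hlam (by linarith) (by linarith)

theorem aux_bessel {d lam u v : ℝ} (hd₂ : d < 1/2) (huv : u < v) :
    ∫ x, auxf d lam (u - x) * auxf d lam (v - x) = besselG d lam u v := by
  set a := v - u with ha
  have ha0 : 0 < a := by linarith
  have habs : |u - v| = a := by rw [abs_sub_comm, abs_of_pos ha0]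
  unfold besselG
  rw [habs]
  let φ : ℝ → ℝ := fun y => auxf d lam y * auxf d lam (a + y)
  have e1 : ∫ x, auxf d lam (u - x) * auxf d lam (v - x) = ∫ y, φ y := by
    rw [← integral_sub_left_eq_self φ volume u]
    congr 1; ext x
    simp only [φ]
    congr 2; rw [ha]; ring
  have e2 : ∫ y, φ y = (a/2) * ∫ w, φ ((a/2) * (w - 1)) := by
    rw [integral_sub_right_eq_self (fun w => φ ((a/2) * w)) 1,
      Measure.integral_comp_mul_left φ (a/2), abs_of_pos (by positivity), smul_eq_mul]
    field_simp
  have e3 : ∀ w, φ ((a/2) * (w - 1)) = (Ioi (1:ℝ)).indicator (fun w =>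
      (a/2)^(2*d-2) * ((w ^ 2 - 1) ^ (d - 1) * Real.exp (-lam * a * w))) w := by
    intro w
    by_cases hw : 1 < w
    · have hw1 : 0 < w - 1 := by linarith
      have hw2 : 0 < w + 1 := by linarith
      have h1 : 0 < a/2 * (w-1) := by positivity
      have h2 : a + a/2 * (w-1) = a/2 * (w+1) := by ring
      have h3 : 0 < a/2 * (w+1) := by positivity
      simp only [indicator, mem_Ioi, hw, if_true, φ]
      rw [h2, auxf_pos h1, auxf_pos h3, Real.mul_rpow (by positivity) hw1.le,
        Real.mul_rpow (by positivity) hw2.le, show w^2-1 = (w-1)*(w+1) by ring,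
        Real.mul_rpow hw1.le hw2.le, show 2*d-2 = (d-1)+(d-1) by ring,
        Real.rpow_add (by positivity : 0 < a/2),
        show -lam * a * w = -lam * (a/2 * (w-1)) + -lam * (a/2*(w+1)) by ring, Real.exp_add]
      ring
    · have : a/2 * (w-1) ≤ 0 := mul_nonpos_of_nonneg_of_nonpos (by positivity) (by linarith)
      simp [indicator, hw, φ, auxf_zero hd₂ this]
  rw [e1, e2]
  simp_rw [e3]
  rw [integral_indicator measurableSet_Ioi, integral_const_mul, ← mul_assoc]
  congr 1
  rw [show 2*d-1 = 1 + (2*d-2) by ring, Real.rpow_add (by positivity), Real.rpow_one]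

/-- extended kernels -/
noncomputable def auxK (d lam s x : ℝ) : ℝ≥0∞ := ENNReal.ofReal (auxf d lam (s - x))

theorem auxK_meas (d lam : ℝ) : Measurable (fun p : ℝ × ℝ => auxK d lam p.1 p.2) := by
  have := auxf_meas d lam
  unfold auxK; fun_prop

noncomputable def auxH (d lam t x y : ℝ) : ℝ≥0∞ :=
  ∫⁻ s in Ioc (0:ℝ) t, auxK d lam s x * auxK d lam s y

noncomputable def auxG (d lam u v : ℝ) : ℝ≥0∞ :=
  ∫⁻ x, auxK d lam u x * auxK d lam v x

theorem auxK_mul (d lam s x u y : ℝ) : auxK d lam s x * auxK d lam u y =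
    ENNReal.ofReal (auxf d lam (s - x) * auxf d lam (u - y)) :=
  (ENNReal.ofReal_mul (auxf_nonneg _ _ _)).symm

theorem auxH_meas (d lam t : ℝ) : Measurable (fun p : ℝ × ℝ => auxH d lam t p.1 p.2) := by
  have := auxK_meas d lam
  unfold auxH
  refine Measurable.lintegral_prod_right' (ν := volume.restrict (Ioc 0 t))
    (f := fun q : (ℝ × ℝ) × ℝ => auxK d lam q.2 q.1.1 * auxK d lam q.2 q.1.2) ?_
  exact (this.comp (f := fun q : (ℝ × ℝ) × ℝ => (q.2, q.1.1)) (by fun_prop)).mul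
    (this.comp (f := fun q : (ℝ × ℝ) × ℝ => (q.2, q.1.2)) (by fun_prop))

theorem auxG_meas (d lam : ℝ) : Measurable (fun p : ℝ × ℝ => auxG d lam p.1 p.2) := by
  have := auxK_meas d lam
  unfold auxG
  refine Measurable.lintegral_prod_right' (ν := volume)
    (f := fun q : (ℝ × ℝ) × ℝ => auxK d lam q.1.1 q.2 * auxK d lam q.1.2 q.2) ?_
  exact (this.comp (f := fun q : (ℝ × ℝ) × ℝ => (q.1.1, q.2)) (by fun_prop)).mul
    (this.comp (f := fun q : (ℝ × ℝ) × ℝ => (q.1.2, q.2)) (by fun_prop))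

theorem auxG_symm (d lam u v : ℝ) : auxG d lam u v = auxG d lam v u := by
  unfold auxG; simp_rw [mul_comm]

theorem auxH_symm (d lam t u v : ℝ) : auxH d lam t u v = auxH d lam t v u := by
  unfold auxH; simp_rw [mul_comm]

theorem auxH_ne_top {d lam t x y : ℝ} (hd₁ : 1/4 < d) (hd₂ : d < 1/2) (hlam : 0 < lam)
    (hxy : x ≠ y) : auxH d lam t x y ≠ ∞ := by
  wlog h : x < y generalizing x y
  · rw [auxH_symm]
    exact this hxy.symm (lt_of_le_of_ne (not_lt.mp h) hxy.symm)
  unfold auxH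
  simp_rw [auxK_mul]
  exact ((aux_int_s hd₁ hd₂ hlam h).restrict).lintegral_lt_top.ne

theorem tRos_eq (d lam t x y : ℝ) : tRosKernel d lam t x y = (auxH d lam t x y).toReal := by
  have hm := auxf_meas d lam
  unfold auxH
  simp_rw [auxK_mul]
  rw [← integral_eq_lintegral_of_nonneg_ae
    (ae_of_all _ fun s => mul_nonneg (auxf_nonneg _ _ _) (auxf_nonneg _ _ _))
    (Measurable.aestronglyMeasurable (by fun_prop))]
  unfold tRosKernel auxf
  congr 1; ext s; ring

theorem ofReal_bessel {d lam u v : ℝ} (hd₁ : 1/4 < d) (hd₂ : d < 1/2) (hlam : 0 < lam)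
    (huv : u ≠ v) : ENNReal.ofReal (besselG d lam u v) = auxG d lam u v := by
  wlog h : u < v generalizing u v
  · rw [auxG_symm, ← this huv.symm (lt_of_le_of_ne (not_lt.mp h) huv.symm)]
    unfold besselG
    rw [abs_sub_comm]
  unfold auxG
  simp_rw [auxK_mul]
  rw [← aux_bessel hd₂ h, ofReal_integral_eq_lintegral_ofReal (aux_int_x hd₁ hd₂ hlam h)
    (ae_of_all _ fun s => mul_nonneg (auxf_nonneg _ _ _) (auxf_nonneg _ _ _))]

theorem bessel_nonneg (d lam u v : ℝ) : 0 ≤ besselG d lam u v := by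
  unfold besselG
  refine mul_nonneg (by positivity) (setIntegral_nonneg measurableSet_Ioi fun w hw => ?_)
  have : 0 ≤ w^2 - 1 := by have : 1 < w := hw; nlinarith
  positivity

theorem aux_ae_ne {m : ℕ} (i j : Fin m) (hij : i ≠ j) : ∀ᵐ x : Fin m → ℝ, x i ≠ x j := by
  let L : (Fin m → ℝ) →ₗ[ℝ] ℝ := LinearMap.proj (R := ℝ) (φ := fun _ : Fin m => ℝ) i -
    LinearMap.proj (R := ℝ) (φ := fun _ : Fin m => ℝ) j
  have h := Measure.addHaar_submodule (volume : Measure (Fin m → ℝ)) (LinearMap.ker L) (by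
    intro h
    have : (Pi.single i 1 : Fin m → ℝ) ∈ LinearMap.ker L := by rw [h]; trivial
    simp [L, Pi.single_apply, hij.symm] at this)
  rw [ae_iff]
  convert h using 2
  ext x
  simp [L, sub_eq_zero]

theorem aux_main {m : ℕ} (d lam t : ℝ) (σ : Equiv.Perm (Fin m)) :
    ∫⁻ x : Fin m → ℝ, ∏ j, auxH d lam t (x j) (x (σ j)) =
    ∫⁻ s in Set.univ.pi (fun _ : Fin m => Set.Ioc (0 : ℝ) t), ∏ j, auxG d lam (s j) (s (σ j)) := by
  have hK := auxK_meas d lam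
  have hK1 : ∀ x, Measurable fun s => auxK d lam s x := fun x =>
    hK.comp (f := fun s => (s, x)) (by fun_prop)
  have hK2 : ∀ s, Measurable fun x => auxK d lam s x := fun s =>
    hK.comp (f := fun x => (s, x)) (by fun_prop)
  rw [volume_pi, Measure.restrict_pi_pi]
  have e1 : ∀ x : Fin m → ℝ, ∏ j, auxH d lam t (x j) (x (σ j)) =
      ∫⁻ s : Fin m → ℝ, ∏ j, (auxK d lam (s j) (x j) * auxK d lam (s j) (x (σ j)))
        ∂(Measure.pi fun _ => volume.restrict (Ioc 0 t)) := by
    intro x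
    rw [aux_lintegral_prod (volume.restrict (Ioc 0 t))
      (fun j s => auxK d lam s (x j) * auxK d lam s (x (σ j))) (fun j => (hK1 _).mul (hK1 _))]
    rfl
  simp_rw [e1]
  rw [lintegral_lintegral_swap]
  · congr 1
    ext s
    have e2 : ∀ x : Fin m → ℝ, ∏ j, (auxK d lam (s j) (x j) * auxK d lam (s j) (x (σ j))) =
        ∏ j, (auxK d lam (s j) (x j) * auxK d lam (s (σ.symm j)) (x j)) := by
      intro x
      rw [Finset.prod_mul_distrib, Finset.prod_mul_distrib]
      congr 1
      rw [← Equiv.prod_comp σ (fun j => auxK d lam (s (σ.symm j)) (x j))]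
      simp
    simp_rw [e2]
    rw [aux_lintegral_prod volume
      (fun j x => auxK d lam (s j) x * auxK d lam (s (σ.symm j)) x) (fun j => (hK2 _).mul (hK2 _))]
    rw [← Equiv.prod_comp σ]
    refine Finset.prod_congr rfl fun j _ => ?_
    rw [auxG_symm]
    simp [auxG]
  · refine Measurable.aemeasurable (Finset.measurable_fun_prod _ fun j _ => ?_)
    exact (hK.comp (f := fun q : (Fin m → ℝ) × (Fin m → ℝ) => (q.2 j, q.1 j)) (by fun_prop)).mul
      (hK.comp (f := fun q : (Fin m → ℝ) × (Fin m → ℝ) => (q.2 j, q.1 (σ j))) (by fun_prop))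

theorem aux_final {m : ℕ} {d lam t : ℝ} (hd₁ : 1/4 < d) (hd₂ : d < 1/2) (hlam : 0 < lam)
    (σ : Equiv.Perm (Fin m)) (hσ : ∀ j, j ≠ σ j) :
    ∫ x : Fin m → ℝ, ∏ j, tRosKernel d lam t (x j) (x (σ j)) =
    ∫ s in Set.univ.pi (fun _ : Fin m => Set.Ioc (0 : ℝ) t), ∏ j,
      besselG d lam (s j) (s (σ j)) := by
  have hne : ∀ᵐ x : Fin m → ℝ, ∀ j, x j ≠ x (σ j) := ae_all_iff.mpr fun j => aux_ae_ne _ _ (hσ j)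
  have hH := auxH_meas d lam t
  have hG := auxG_meas d lam
  rw [integral_eq_lintegral_of_nonneg_ae, integral_eq_lintegral_of_nonneg_ae]
  · congr 1
    have l : ∫⁻ x : Fin m → ℝ, ENNReal.ofReal (∏ j, tRosKernel d lam t (x j) (x (σ j))) =
        ∫⁻ x : Fin m → ℝ, ∏ j, auxH d lam t (x j) (x (σ j)) := by
      refine lintegral_congr_ae ?_
      filter_upwards [hne] with x hx
      rw [ENNReal.ofReal_prod_of_nonneg fun j _ => by rw [tRos_eq]; positivity]
      refine Finset.prod_congr rfl fun j _ => ?_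
      rw [tRos_eq, ENNReal.ofReal_toReal (auxH_ne_top hd₁ hd₂ hlam (hx j))]
    rw [l, aux_main]
    refine lintegral_congr_ae ?_
    filter_upwards [ae_restrict_of_ae hne] with x hx
    rw [ENNReal.ofReal_prod_of_nonneg fun j _ => bessel_nonneg _ _ _ _]
    refine Finset.prod_congr rfl fun j _ => ?_
    rw [ofReal_bessel hd₁ hd₂ hlam (hx j)]
  · exact ae_of_all _ fun x => Finset.prod_nonneg fun j _ => bessel_nonneg _ _ _ _
  · have hm : Measurable fun s : Fin m → ℝ => ∏ j, (auxG d lam (s j) (s (σ j))).toReal :=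
      Finset.measurable_fun_prod _ fun j _ => (hG.comp
        (f := fun s : Fin m → ℝ => (s j, s (σ j))) (by fun_prop)).ennreal_toReal
    refine hm.aestronglyMeasurable.congr ?_
    filter_upwards [ae_restrict_of_ae hne] with x hx
    refine Finset.prod_congr rfl fun j _ => ?_
    rw [← ofReal_bessel hd₁ hd₂ hlam (hx j), ENNReal.toReal_ofReal (bessel_nonneg _ _ _ _)]
  · exact ae_of_all _ fun x => Finset.prod_nonneg fun j _ => by rw [tRos_eq]; positivity
  · simp_rw [tRos_eq]
    exact (Finset.measurable_fun_prod _ fun j _ => (hH.comp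
        (f := fun s : Fin m → ℝ => (s j, s (σ j))) (by fun_prop)).ennreal_toReal).aestronglyMeasurable

theorem stmt14 (d : ℝ) (hd₁ : 1/4 < d) (hd₂ : d < 1/2)
    (lam : ℝ) (hlam : 0 < lam) (t : ℝ) (ht : 0 < t)
    (m : ℕ) (hm : 2 ≤ m) :
    (∫ x : Fin m → ℝ, ∏ j : Fin m,
        tRosKernel d lam t (x j) (x ⟨((j : ℕ) + 1) % m, Nat.mod_lt _ (by omega)⟩)) =
      ∫ s in Set.univ.pi (fun _ : Fin m => Set.Ioc (0 : ℝ) t), ∏ j : Fin m,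
        besselG d lam (s j) (s ⟨((j : ℕ) + 1) % m, Nat.mod_lt _ (by omega)⟩) := by
  have hinj : Function.Injective
      (fun j : Fin m => (⟨((j : ℕ) + 1) % m, Nat.mod_lt _ (by omega)⟩ : Fin m)) := by
    intro i j hij
    have h : ((i : ℕ) + 1) % m = ((j : ℕ) + 1) % m := congrArg Fin.val hij
    have hmod : (i : ℕ) ≡ (j : ℕ) [MOD m] := Nat.ModEq.add_right_cancel' 1 h
    exact Fin.ext (Nat.ModEq.eq_of_lt_of_lt hmod i.2 j.2)
  let σ : Equiv.Perm (Fin m) := Equiv.ofBijective _ (Finite.injective_iff_bijective.mp hinj)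
  refine aux_final hd₁ hd₂ hlam σ (fun j hj => ?_)
  have h : (j : ℕ) = ((j : ℕ) + 1) % m := congrArg Fin.val hj
  have hj2 := j.2
  rcases Nat.lt_or_ge ((j : ℕ) + 1) m with h1 | h1
  · rw [Nat.mod_eq_of_lt h1] at h; omega
  · have h2 : (j : ℕ) + 1 = m := by omega
    rw [h2, Nat.mod_self] at h; omega
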